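/- arXiv:1702.04228 — 2 statements merged into one kernel-verified Lean document; each statement's English description precedes it below -/
import Mathlib

section
/- Theorem 1 (degree theorem, connected case): if the (D+1)-colored graph encoded by σ is connected, i.e. C(σ) = 1, then there exists a nonnegative integer ω (the degree of σ) such that 2·ω = (D−1)! · ( D(D−1)/2 · k + D − F(σ) ). In particular F(σ) ≤ D(D−1)/2 · k + D. -/
/-- Number of cycles of a permutation counting fixed points: the number of orbits
on `Fin k` of the cyclic group generated by `τ`. -/
noncomputable def cycleCount {k : ℕ} (τ : Equiv.Perm (Fin k)) : ℕ :=
  Nat.card (MulAction.orbitRel.Quotient (Subgroup.zpowers τ) (Fin k))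

/-- Total number of faces of the `(D+1)`-colored graph encoded by `σ`:
`F(σ) = Σ_{c₁ < c₂} c(σ⁽ᶜ¹⁾ ∘ (σ⁽ᶜ²⁾)⁻¹)`. -/
noncomputable def faceCount {k D : ℕ} (σ : Fin (D + 1) → Equiv.Perm (Fin k)) : ℕ :=
  ∑ p ∈ Finset.univ.filter (fun p : Fin (D + 1) × Fin (D + 1) => p.1 < p.2),
    cycleCount (σ p.1 * (σ p.2)⁻¹)

/-- Number of connected components of the `(D+1)`-colored graph encoded by `σ`:
the number of orbits on `Fin k` of the subgroup generated by `(σ⁽⁰⁾)⁻¹ ∘ σ⁽ᶜ⁾`, `1 ≤ c ≤ D`. -/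
noncomputable def compCount {k D : ℕ} (σ : Fin (D + 1) → Equiv.Perm (Fin k)) : ℕ :=
  Nat.card (MulAction.orbitRel.Quotient
    (Subgroup.closure
      {g : Equiv.Perm (Fin k) | ∃ c : Fin (D + 1), c ≠ 0 ∧ g = (σ 0)⁻¹ * σ c}) (Fin k))

/-!
A jacket of the colored graph is the closed surface obtained from a cyclic ordering of the colors by
filling in the faces whose two colors are consecutive. For every pair of colors `c`, `d`, the map
`f ↦ f ∘ σ c - f ∘ σ d` has rank `k` minus the number of faces with these colors. Around a cyclic
ordering these maps sum to zero, and if the graph is connected then their common kernel consists of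
the constants and their ranges together span the functions of sum zero. By linear algebra their
ranks add up to at least `2 * (k - 1)`, which says that the jacket has nonnegative genus. Every pair
of colors is consecutive in the same number of jackets, so averaging over all orderings bounds the
number of faces of the graph.

Integrality is clear for `D ≥ 3`, when `(D - 1)!` is even. For `D = 2` the graph is its own only
jacket, and its Euler characteristic is even because the signs of the permutations `σ c * (σ d)⁻¹`
around the cycle multiply to one.
-/

open Equiv Module MulAction
open scoped Nat

section Orbits

variable {G α β M : Type*} [Group G] [MulAction G α]

theorem apply_smul_eq_of_mem_closure {S : Set G} {f : α → β}
    (hf : ∀ g ∈ S, ∀ x, f (g • x) = f x) {g : G} (hg : g ∈ Subgroup.closure S) (x : α) :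
    f (g • x) = f x := by
  induction hg using Subgroup.closure_induction generalizing x with
  | mem g hg => exact hf g hg x
  | one => rw [one_smul]
  | mul a b _ _ ha hb => rw [mul_smul, ha, hb]
  | inv a _ ha => rw [← ha, smul_inv_smul]

theorem card_nsmul_sum_apply_smul [Fintype G] [Fintype α] [IsPretransitive G α]
    [AddCommMonoid M] (f : α → M) (x : α) :
    Fintype.card α • ∑ g : G, f (g • x) = Fintype.card G • ∑ y, f y := by
  have sum_eq (y : α) : ∑ g : G, f (g • y) = ∑ g : G, f (g • x) := by
    obtain ⟨h, rfl⟩ := exists_smul_eq G x y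
    simpa only [coe_mulRight, mul_smul] using Equiv.sum_comp (Equiv.mulRight h) fun g => f (g • x)
  calc Fintype.card α • ∑ g : G, f (g • x)
      = ∑ y, ∑ g : G, f (g • y) := by simp [sum_eq]
    _ = ∑ g : G, ∑ y, f (g • y) := Finset.sum_comm
    _ = ∑ _g : G, ∑ y, f y :=
        Finset.sum_congr rfl fun g _ => Equiv.sum_comp (MulAction.toPerm g) f
    _ = Fintype.card G • ∑ y, f y := by simp

end Orbits

section Cycles

variable {α β K : Type*}

/-- The number of cycles of a permutation, fixed points included; on `Fin k` this is
`cycleCount` by definition. -/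
noncomputable def numCycles (τ : Perm α) : ℕ :=
  Nat.card (orbitRel.Quotient (Subgroup.zpowers τ) α)

theorem numCycles_inv (τ : Perm α) : numCycles τ⁻¹ = numCycles τ := by
  rw [numCycles, numCycles, Subgroup.zpowers_inv]

theorem numCycles_mul_inv_comm (σ τ : Perm α) :
    numCycles (σ * τ⁻¹) = numCycles (τ * σ⁻¹) := by
  rw [← numCycles_inv, mul_inv_rev, inv_inv]

theorem apply_eq_apply_of_sameCycle {τ : Perm α} {f : α → β} (hf : ∀ x, f (τ x) = f x)
    {x y : α} (hxy : τ.SameCycle x y) : f x = f y := by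
  obtain ⟨n, rfl⟩ := hxy
  refine (apply_smul_eq_of_mem_closure (S := {τ}) ?_ ?_ x).symm
  · rintro _ rfl x
    exact hf x
  · exact zpow_mem (Subgroup.mem_closure_singleton_self τ) n

theorem orbitRel_zpowers_eq_sameCycle_setoid (τ : Perm α) :
    orbitRel (Subgroup.zpowers τ) α = Perm.SameCycle.setoid τ := by
  ext x y
  rw [orbitRel_apply, mem_orbit_iff]
  exact ⟨fun ⟨⟨_, n, rfl⟩, h⟩ => Perm.SameCycle.symm ⟨n, h⟩,
    fun h => h.symm.elim fun n h => ⟨⟨τ ^ n, n, rfl⟩, h⟩⟩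

section Sign

variable [Fintype α] [DecidableEq α]

/-- A complete invariant for lying in the same cycle of `τ`: the point itself if it is fixed,
the cyclic factor of `τ` moving it otherwise. -/
def cycleLabel (τ : Perm α) (x : α) : α ⊕ Perm α :=
  if τ x = x then .inl x else .inr (τ.cycleOf x)

theorem cycleLabel_eq_cycleLabel_iff (τ : Perm α) (x y : α) :
    cycleLabel τ x = cycleLabel τ y ↔ τ.SameCycle x y := by
  by_cases hx : τ x = x <;> by_cases hy : τ y = y
  · simp only [cycleLabel, hx, hy, if_true, Sum.inl.injEq]
    exact ⟨fun h => h ▸ .refl _ _, fun h => h.eq_of_left hx⟩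
  · simp only [cycleLabel, hx, hy, if_true, if_false, reduceCtorEq, false_iff]
    exact fun h => hy (h.apply_eq_self_iff.1 hx)
  · simp only [cycleLabel, hx, hy, if_true, if_false, reduceCtorEq, false_iff]
    exact fun h => hx (h.apply_eq_self_iff.2 hy)
  · simp only [cycleLabel, hx, hy, if_false, Sum.inr.injEq]
    exact (Perm.sameCycle_iff_cycleOf_eq_of_mem_support
      (Perm.mem_support.2 hx) (Perm.mem_support.2 hy)).symm

theorem range_cycleLabel (τ : Perm α) :
    Set.range (cycleLabel τ) = (τ.supportᶜ).disjSum τ.cycleFactorsFinset := by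
  ext (x | c)
  · suffices (∃ y, cycleLabel τ y = .inl x) ↔ τ x = x by simpa
    refine ⟨fun ⟨y, hy⟩ => ?_, fun hx => ⟨x, if_pos hx⟩⟩
    rw [cycleLabel] at hy
    split_ifs at hy with hfix
    exact Sum.inl_injective hy ▸ hfix
  · suffices (∃ y, cycleLabel τ y = .inr c) ↔ c ∈ τ.cycleFactorsFinset by simpa
    refine ⟨fun ⟨y, hy⟩ => ?_, fun hc => ?_⟩
    · rw [cycleLabel] at hy
      split_ifs at hy with hfix
      rw [← Sum.inr_injective hy]
      exact Perm.cycleOf_mem_cycleFactorsFinset_iff.2 (Perm.mem_support.2 hfix)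
    · obtain ⟨y, hy⟩ := (Perm.mem_cycleFactorsFinset_iff.1 hc).1.nonempty_support
      have hmoved := Perm.mem_support.1 (Perm.mem_cycleFactorsFinset_support_le hc hy)
      exact ⟨y, by rw [cycleLabel, if_neg hmoved, Perm.cycle_is_cycleOf hy hc]⟩

theorem numCycles_eq_card_compl_support_add_card_cycleFactorsFinset (τ : Perm α) :
    numCycles τ = (τ.supportᶜ).card + τ.cycleFactorsFinset.card := by
  have hker : orbitRel (Subgroup.zpowers τ) α = Setoid.ker (cycleLabel τ) := by
    rw [orbitRel_zpowers_eq_sameCycle_setoid]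
    ext x y
    exact (cycleLabel_eq_cycleLabel_iff τ x y).symm
  rw [numCycles, orbitRel.Quotient, hker,
    Nat.card_congr (Setoid.quotientKerEquivRange (cycleLabel τ)), range_cycleLabel,
    Nat.card_coe_set_eq, Set.ncard_coe_finset, Finset.card_disjSum]

theorem sign_eq_neg_one_pow_card_add_numCycles (τ : Perm α) :
    Perm.sign τ = (-1) ^ (Fintype.card α + numCycles τ) := by
  have hcard : τ.support.card + (τ.supportᶜ).card = Fintype.card α :=
    Finset.card_add_card_compl _
  have hexp : Fintype.card α + numCycles τ =
      τ.cycleType.sum + τ.cycleType.card + 2 * (τ.supportᶜ).card := by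
    rw [numCycles_eq_card_compl_support_add_card_cycleFactorsFinset, Perm.sum_cycleType,
      Perm.cycleType_def, Multiset.card_map, Finset.card_val]
    omega
  rw [Perm.sign_of_cycleType, hexp, pow_add _ _ (2 * _), pow_mul]
  simp

end Sign

section Rank

/-- The linear map `f ↦ f ∘ σ - f ∘ τ`. For the permutations `σ` and `τ` of two colors, its kernel
consists of the labellings of the black vertices that are constant on the faces of these two
colors. -/
def pullbackSub (K : Type*) [Ring K] (σ τ : α → β) : (β → K) →ₗ[K] α → K :=
  LinearMap.funLeft K K σ - LinearMap.funLeft K K τ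

theorem pullbackSub_apply [Ring K] (σ τ : α → β) (f : β → K) (x : α) :
    pullbackSub K σ τ f x = f (σ x) - f (τ x) :=
  rfl

theorem pullbackSub_single [Ring K] [DecidableEq α] (σ τ : Perm α) (x : α) (a : K) :
    pullbackSub K σ τ (Pi.single x a) = Pi.single (σ⁻¹ x) a - Pi.single (τ⁻¹ x) a := by
  ext y
  simp [pullbackSub_apply, Pi.single_apply, Equiv.eq_symm_apply]

theorem mem_ker_pullbackSub [Ring K] {σ τ : α → β} {f : β → K} :
    f ∈ (pullbackSub K σ τ).ker ↔ ∀ x, f (σ x) = f (τ x) := by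
  simp [funext_iff, pullbackSub_apply, sub_eq_zero]

theorem ker_pullbackSub [Ring K] (σ τ : Perm α) :
    (pullbackSub K σ τ).ker =
      (LinearMap.funLeft K K (Quotient.mk (orbitRel (Subgroup.zpowers (σ * τ⁻¹)) α))).range := by
  ext f
  rw [mem_ker_pullbackSub, orbitRel_zpowers_eq_sameCycle_setoid]
  constructor
  · intro hf
    have hinv (x : α) : f ((σ * τ⁻¹) x) = f x := by simpa using hf (τ⁻¹ x)
    exact ⟨Quotient.lift f fun _ _ => apply_eq_apply_of_sameCycle hinv, rfl⟩
  · rintro ⟨g, rfl⟩ x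
    exact congrArg g (Quotient.sound (Perm.SameCycle.symm ⟨1, by simp⟩))

theorem finrank_ker_pullbackSub [DivisionRing K] [Finite α] (σ τ : Perm α) :
    finrank K (pullbackSub K σ τ).ker = numCycles (σ * τ⁻¹) := by
  have := Fintype.ofFinite (orbitRel.Quotient (Subgroup.zpowers (σ * τ⁻¹)) α)
  rw [ker_pullbackSub, LinearMap.finrank_range_of_inj
    (LinearMap.funLeft_injective_of_surjective K K _ Quotient.mk_surjective), numCycles,
    Nat.card_eq_fintype_card]
  exact finrank_fintype_fun_eq_card K

theorem finrank_range_pullbackSub_add_numCycles [DivisionRing K] [Fintype α] (σ τ : Perm α) :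
    finrank K (pullbackSub K σ τ).range + numCycles (σ * τ⁻¹) = Fintype.card α := by
  rw [← finrank_ker_pullbackSub (K := K), LinearMap.finrank_range_add_finrank_ker,
    finrank_fintype_fun_eq_card]

/- The maps `V → ∏ range (A i) → W` compose to `∑ A i = 0`, so the image of the first lies in the
kernel of the second. This is the linear algebra behind Scott's lemma on generators of a linear
group with product `1`. -/
theorem finrank_add_finrank_iSup_range_le {V W ι : Type*} [DivisionRing K] [AddCommGroup V]
    [Module K V] [FiniteDimensional K V] [AddCommGroup W] [Module K W] [Fintype ι]
    (A : ι → V →ₗ[K] W) (hA : ∑ i, A i = 0) :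
    finrank K V + finrank K ↥(⨆ i, (A i).range) ≤
      ∑ i, finrank K (A i).range + finrank K ↥(⨅ i, (A i).ker) := by
  classical
  let split : V →ₗ[K] ∀ i, (A i).range := LinearMap.pi fun i => (A i).rangeRestrict
  let total : (∀ i, (A i).range) →ₗ[K] W := LinearMap.lsum K _ ℕ fun i => (A i).range.subtype
  have ker_split : split.ker = ⨅ i, (A i).ker := by simp [split, LinearMap.ker_pi]
  have iSup_range_le : ⨆ i, (A i).range ≤ total.range :=
    iSup_le fun i w hw => ⟨Pi.single i ⟨w, hw⟩, LinearMap.lsum_piSingle ..⟩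
  have range_split_le : split.range ≤ total.ker := by
    rintro _ ⟨v, rfl⟩
    simpa [total, split] using LinearMap.congr_fun hA v
  have hsplit := split.finrank_range_add_finrank_ker
  have htotal := total.finrank_range_add_finrank_ker
  rw [ker_split] at hsplit
  rw [finrank_pi_fintype] at htotal
  have hsup := Submodule.finrank_mono iSup_range_le
  have hrange := Submodule.finrank_mono range_split_le
  omega

theorem finrank_le_one_of_forall_apply_eq_apply [DivisionRing K] {S : Submodule K (α → K)}
    (hS : ∀ f ∈ S, ∀ x y, f x = f y) : finrank K S ≤ 1 := by
  rcases isEmpty_or_nonempty α with _ | ⟨⟨x₀⟩⟩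
  · rw [finrank_zero_of_subsingleton]
    exact zero_le_one
  · have hle : S ≤ Submodule.span K {fun _ => 1} := fun f hf =>
      Submodule.mem_span_singleton.2 ⟨f x₀, funext fun x => by simpa using hS f hf x₀ x⟩
    exact (Submodule.finrank_mono hle).trans ((finrank_span_le_card _).trans (by simp))

theorem card_le_finrank_add_one_of_forall_single_sub_single_mem [DivisionRing K] [Fintype α]
    [DecidableEq α] {S : Submodule K (α → K)}
    (hS : ∀ x y, Pi.single x 1 - Pi.single y 1 ∈ S) : Fintype.card α ≤ finrank K S + 1 := by
  rcases isEmpty_or_nonempty α with _ | ⟨⟨x₀⟩⟩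
  · simp
  · let L := Submodule.span K {(Pi.single x₀ 1 : α → K)}
    have hL : finrank K L ≤ 1 := (finrank_span_le_card _).trans (by simp)
    have htop : S ⊔ L = ⊤ := by
      rw [eq_top_iff, ← (Pi.basisFun K α).span_eq, Submodule.span_le]
      rintro _ ⟨x, rfl⟩
      have hx₀ : (Pi.single x₀ 1 : α → K) ∈ L := Submodule.mem_span_singleton_self _
      simpa using Submodule.add_mem_sup (hS x x₀) hx₀
    have hsup := Submodule.finrank_add_le_finrank_add_finrank S L
    rw [htop, finrank_top, finrank_fintype_fun_eq_card] at hsup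
    omega

end Rank

end Cycles

section Jackets

variable {ι α β K : Type*}

/-- Connectedness of the bipartite edge-colored graph encoded by `σ`: any two white vertices are
joined by a path, each pair of consecutive edges of which acts on the white vertices as
`(σ c)⁻¹ * σ d`. -/
def IsColorConnected (σ : ι → Perm α) : Prop :=
  IsPretransitive (Subgroup.closure {g : Perm α | ∃ c d, g = (σ c)⁻¹ * σ d}) α

theorem isColorConnected_of_compCount_eq_one {k D : ℕ} {σ : Fin (D + 1) → Perm (Fin k)}
    (h : compCount σ = 1) : IsColorConnected σ := by
  have htrans := (pretransitive_iff_subsingleton_quotient _ _).2 (Nat.card_eq_one_iff_unique.1 h).1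
  refine ⟨fun x y => ?_⟩
  obtain ⟨⟨g, hg⟩, hgx⟩ := htrans.exists_smul_eq x y
  exact ⟨⟨g, Subgroup.closure_mono (by rintro _ ⟨c, _, rfl⟩; exact ⟨0, c, rfl⟩) hg⟩, hgx⟩

theorem IsColorConnected.apply_eq_apply {σ : ι → Perm α} (hσ : IsColorConnected σ)
    {white black : α → β} (h : ∀ c x, black (σ c x) = white x) (x y : α) :
    white x = white y := by
  obtain ⟨⟨g, hg⟩, rfl⟩ := hσ.exists_smul_eq y x
  refine apply_smul_eq_of_mem_closure ?_ hg y
  rintro _ ⟨c, d, rfl⟩ x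
  rw [← h c, ← h d x]
  simp

theorem IsColorConnected.comp {σ : ι → Perm α} (hσ : IsColorConnected σ) (π : Perm ι) :
    IsColorConnected (σ ∘ π) := by
  have hgens : {g : Perm α | ∃ c d, g = (σ (π c))⁻¹ * σ (π d)} =
      {g | ∃ c d, g = (σ c)⁻¹ * σ d} := by
    ext g
    exact (π.surjective.exists₂ (p := fun c d => g = (σ c)⁻¹ * σ d)).symm
  rw [IsColorConnected] at hσ ⊢
  exact hgens ▸ hσ

/-- The number of faces of a jacket of the graph encoded by `σ`: the surface, given by a cyclic
ordering `ρ` of the colors, whose faces are those with two consecutive colors `i` and `ρ i`. -/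
noncomputable def jacketFaceCount [Fintype ι] (σ : ι → Perm α) (ρ : Perm ι) : ℕ :=
  ∑ i, numCycles (σ i * (σ (ρ i))⁻¹)

theorem even_card_mul_card_add_jacketFaceCount [Fintype ι] [Fintype α] (σ : ι → Perm α)
    (ρ : Perm ι) : Even (Fintype.card ι * Fintype.card α + jacketFaceCount σ ρ) := by
  classical
  refine (neg_one_pow_eq_one_iff_even (R := ℤˣ) (by decide)).1 ?_
  calc (-1 : ℤˣ) ^ (Fintype.card ι * Fintype.card α + jacketFaceCount σ ρ)
      = ∏ i, Perm.sign (σ i * (σ (ρ i))⁻¹) := by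
        simp only [sign_eq_neg_one_pow_card_add_numCycles, Finset.prod_pow_eq_pow_sum,
          Finset.sum_add_distrib, Finset.sum_const, Finset.card_univ, smul_eq_mul,
          jacketFaceCount]
    _ = (∏ i, Perm.sign (σ i)) * (∏ i, Perm.sign (σ (ρ i)))⁻¹ := by
        simp only [Perm.sign_mul, map_inv, Finset.prod_mul_distrib, Finset.prod_inv_distrib]
    _ = 1 := by
        rw [Equiv.prod_comp ρ fun i => Perm.sign (σ i), mul_inv_cancel]

section Genus

variable [Nonempty ι] {σ : ι → Perm α} {ρ : Perm ι}

theorem IsColorConnected.finrank_iInf_ker_le_one [DivisionRing K]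
    (hσ : IsColorConnected σ) (hρ : ρ.IsCycleOn Set.univ) :
    finrank K ↥(⨅ i, (pullbackSub K (σ i) (σ (ρ i))).ker) ≤ 1 := by
  refine finrank_le_one_of_forall_apply_eq_apply fun f hf => ?_
  simp only [Submodule.mem_iInf, mem_ker_pullbackSub] at hf
  have c₀ := Classical.arbitrary ι
  have hedge (c : ι) (x : α) : f (σ c x) = f (σ c₀ x) :=
    apply_eq_apply_of_sameCycle (f := fun c => f (σ c x)) (fun i => (hf i x).symm)
      (hρ.2 trivial trivial)
  rw [(σ c₀).surjective.forall₂]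
  exact hσ.apply_eq_apply hedge

theorem IsColorConnected.card_le_finrank_iSup_range_add_one [DivisionRing K] [Fintype α]
    (hσ : IsColorConnected σ) (hρ : ρ.IsCycleOn Set.univ) :
    Fintype.card α ≤ finrank K ↥(⨆ i, (pullbackSub K (σ i) (σ (ρ i))).range) + 1 := by
  classical
  set R := ⨆ i, (pullbackSub K (σ i) (σ (ρ i))).range
  let e (x : α) : (α → K) ⧸ R := R.mkQ (Pi.single x 1)
  have c₀ := Classical.arbitrary ι
  have he (i : ι) (x : α) : e ((σ i)⁻¹ x) = e ((σ (ρ i))⁻¹ x) :=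
    (Submodule.Quotient.eq R).2
      (Submodule.mem_iSup_of_mem i ⟨Pi.single x 1, pullbackSub_single ..⟩)
  have hedge (c : ι) (x : α) : e ((σ c₀)⁻¹ (σ c x)) = e x := by
    simpa using apply_eq_apply_of_sameCycle (f := fun i => e ((σ i)⁻¹ (σ c x)))
      (fun i => (he i _).symm) (hρ.2 (x := c₀) (y := c) trivial trivial)
  refine card_le_finrank_add_one_of_forall_single_sub_single_mem fun x y => ?_
  exact (Submodule.Quotient.eq R).1
    (hσ.apply_eq_apply (black := fun y => e ((σ c₀)⁻¹ y)) hedge x y)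

/- Twice the genus of the jacket is `2 - (2 * card α - card ι * card α + jacketFaceCount σ ρ)`. -/
theorem IsColorConnected.jacketFaceCount_add_two_mul_card_le [Fintype ι] [Fintype α]
    (hσ : IsColorConnected σ) (hρ : ρ.IsCycleOn Set.univ) :
    jacketFaceCount σ ρ + 2 * Fintype.card α ≤ Fintype.card ι * Fintype.card α + 2 := by
  have hsum : ∑ i, pullbackSub ℚ (σ i) (σ (ρ i)) = 0 := by
    simp only [pullbackSub, Finset.sum_sub_distrib, sub_eq_zero]
    exact (Equiv.sum_comp ρ fun i => LinearMap.funLeft ℚ ℚ (σ i)).symm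
  have hfaces : ∑ i, finrank ℚ (pullbackSub ℚ (σ i) (σ (ρ i))).range + jacketFaceCount σ ρ =
      Fintype.card ι * Fintype.card α := by
    simp [jacketFaceCount, ← Finset.sum_add_distrib, finrank_range_pullbackSub_add_numCycles]
  have hrank := finrank_add_finrank_iSup_range_le _ hsum
  rw [finrank_fintype_fun_eq_card] at hrank
  have hker := hσ.finrank_iInf_ker_le_one (K := ℚ) hρ
  have hrange := hσ.card_le_finrank_iSup_range_add_one (K := ℚ) hρ
  omega

end Genus

end Jackets

section Average

theorem sum_embedding_fin_two {ι M : Type*} [Fintype ι] [LinearOrder ι] [AddCommMonoid M]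
    {w : ι → ι → M} (hw : ∀ i j, w i j = w j i) :
    ∑ e : Fin 2 ↪ ι, w (e 0) (e 1) = 2 • ∑ p : ι × ι with p.1 < p.2, w p.1 p.2 := by
  have hswap : ∑ p : ι × ι with p.2 < p.1, w p.1 p.2 = ∑ p : ι × ι with p.1 < p.2, w p.1 p.2 :=
    Finset.sum_equiv (Equiv.prodComm ι ι) (by simp) fun p _ => hw p.1 p.2
  calc ∑ e : Fin 2 ↪ ι, w (e 0) (e 1)
      = ∑ p : {(i, j) : ι × ι | i ≠ j}, w p.1.1 p.1.2 :=
        Equiv.sum_comp Function.Embedding.twoEmbeddingEquiv fun p => w p.1.1 p.1.2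
    _ = ∑ p : ι × ι with p.1 ≠ p.2, w p.1 p.2 :=
        (Finset.sum_subtype _ (by simp) fun p : ι × ι => w p.1 p.2).symm
    _ = ∑ p : ι × ι with p.1 < p.2 ∨ p.2 < p.1, w p.1 p.2 := by simp only [lt_or_lt_iff_ne]
    _ = 2 • ∑ p : ι × ι with p.1 < p.2, w p.1 p.2 := by
        rw [Finset.filter_or, Finset.sum_union (Finset.disjoint_filter.2 fun p _ h => h.not_gt),
          hswap, two_nsmul]

theorem mul_sum_jacketFaceCount_comp {k D : ℕ} (σ : Fin (D + 1) → Perm (Fin k))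
    {ρ : Perm (Fin (D + 1))} (hρ : ∀ i, ρ i ≠ i) :
    D * ∑ π : Perm (Fin (D + 1)), jacketFaceCount (σ ∘ π) ρ = 2 * (D + 1)! * faceCount σ := by
  let w (i j : Fin (D + 1)) : ℕ := numCycles (σ i * (σ j)⁻¹)
  have hpair (i j : Fin (D + 1)) (hij : i ≠ j) :
      (D + 1) * D * ∑ π : Perm (Fin (D + 1)), w (π i) (π j) = (D + 1)! * (2 * faceCount σ) := by
    have := Perm.isMultiplyPretransitive (Fin (D + 1)) 2
    have haverage := card_nsmul_sum_apply_smul (G := Perm (Fin (D + 1)))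
      (fun e : Fin 2 ↪ Fin (D + 1) => w (e 0) (e 1)) (Function.Embedding.embFinTwo hij)
    rw [sum_embedding_fin_two fun i j => numCycles_mul_inv_comm (σ i) (σ j), smul_eq_mul,
      smul_eq_mul, smul_eq_mul, Fintype.card_embedding_eq, Fintype.card_perm, Fintype.card_fin,
      Fintype.card_fin, Nat.succ_descFactorial_succ, Nat.descFactorial_one] at haverage
    exact haverage
  refine Nat.eq_of_mul_eq_mul_left D.succ_pos ?_
  calc (D + 1) * (D * ∑ π : Perm (Fin (D + 1)), jacketFaceCount (σ ∘ π) ρ)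
      = ∑ i, (D + 1) * D * ∑ π : Perm (Fin (D + 1)), w (π i) (π (ρ i)) := by
        rw [← Finset.mul_sum, Finset.sum_comm, mul_assoc]
        rfl
    _ = ∑ _i : Fin (D + 1), (D + 1)! * (2 * faceCount σ) :=
        Finset.sum_congr rfl fun i _ => hpair i (ρ i) (hρ i).symm
    _ = (D + 1) * (2 * (D + 1)! * faceCount σ) := by
        rw [Finset.sum_const, Finset.card_univ, Fintype.card_fin, smul_eq_mul]
        ring

theorem isCycleOn_univ_finRotate (n : ℕ) : (finRotate (n + 2)).IsCycleOn Set.univ := by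
  convert (isCycle_finRotate (n := n)).isCycleOn
  simp

theorem IsColorConnected.two_mul_faceCount_le {k D : ℕ} {σ : Fin (D + 1) → Perm (Fin k)}
    (hσ : IsColorConnected σ) (hD : 1 ≤ D) : 2 * faceCount σ ≤ D * ((D - 1) * k + 2) := by
  obtain ⟨d, rfl⟩ := Nat.exists_eq_add_of_le' hD
  have hρ := isCycleOn_univ_finRotate d
  refine Nat.le_of_mul_le_mul_left ?_ (d + 1 + 1).factorial_pos
  calc (d + 1 + 1)! * (2 * faceCount σ)
      = (d + 1) * ∑ π : Perm (Fin (d + 1 + 1)), jacketFaceCount (σ ∘ π) (finRotate _) := by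
        rw [mul_sum_jacketFaceCount_comp σ fun i => hρ.apply_ne Set.nontrivial_univ trivial]
        ring
    _ ≤ (d + 1) * ∑ _π : Perm (Fin (d + 1 + 1)), (d * k + 2) := by
        gcongr with π
        have hgenus := (hσ.comp π).jacketFaceCount_add_two_mul_card_le hρ
        rw [Fintype.card_fin, Fintype.card_fin] at hgenus
        linarith
    _ = (d + 1 + 1)! * ((d + 1) * ((d + 1 - 1) * k + 2)) := by
        rw [Finset.sum_const, Finset.card_univ, Fintype.card_perm, Fintype.card_fin, smul_eq_mul,
          Nat.add_sub_cancel, mul_left_comm]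

theorem faceCount_eq_jacketFaceCount {k : ℕ} (σ : Fin (2 + 1) → Perm (Fin k)) :
    faceCount σ = jacketFaceCount σ (finRotate 3) := by
  have hpairs : ({p | p.1 < p.2} : Finset (Fin 3 × Fin 3)) = {(0, 1), (1, 2), (0, 2)} := by
    decide
  calc faceCount σ
      = numCycles (σ 0 * (σ 1)⁻¹) + numCycles (σ 1 * (σ 2)⁻¹) + numCycles (σ 0 * (σ 2)⁻¹) := by
        rw [faceCount, hpairs, Finset.sum_insert (by decide), Finset.sum_pair (by decide),
          ← add_assoc]
        rfl
    _ = jacketFaceCount σ (finRotate 3) := by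
        rw [numCycles_mul_inv_comm (σ 0) (σ 2), jacketFaceCount, Fin.sum_univ_three]
        rfl

theorem even_factorial_mul_sub_faceCount {k D : ℕ} (hD : 2 ≤ D)
    (σ : Fin (D + 1) → Perm (Fin k)) :
    Even (((D - 1)! : ℤ) * ((D * (D - 1) / 2 : ℕ) * k + D - faceCount σ)) := by
  rcases hD.eq_or_lt with rfl | hD
  · have h := even_card_mul_card_add_jacketFaceCount σ (finRotate 3)
    rw [← faceCount_eq_jacketFaceCount, Fintype.card_fin, Fintype.card_fin] at h
    refine Even.mul_left ?_ _
    grind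
  · have h : Even (D - 1)! := even_iff_two_dvd.2 (Nat.dvd_factorial two_pos (by omega))
    exact ((Int.even_coe_nat _).2 h).mul_right _

end Average

/-- Theorem 1 (degree theorem, connected case): if the `(D+1)`-colored graph encoded by
`σ` is connected then there is a nonnegative integer `ω` (the degree) with
`2·ω = (D−1)! · (D(D−1)/2 · k + D − F(σ))`; in particular `F(σ) ≤ D(D−1)/2 · k + D`. -/
theorem degree_theorem_connected (k D : ℕ) (hk : 1 ≤ k) (hD : 2 ≤ D)
    (σ : Fin (D + 1) → Equiv.Perm (Fin k)) (hconn : compCount σ = 1) :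
    (∃ ω : ℕ, (2 : ℤ) * ω =
        (Nat.factorial (D - 1) : ℤ) *
          ((D * (D - 1) / 2 : ℕ) * k + D - (faceCount σ : ℤ))) ∧
      faceCount σ ≤ D * (D - 1) / 2 * k + D := by
  have hfaces := (isColorConnected_of_compCount_eq_one hconn).two_mul_faceCount_le (by omega)
  have htwo : 2 * (D * (D - 1) / 2) = D * (D - 1) :=
    Nat.mul_div_cancel' (Nat.even_mul_pred_self D).two_dvd
  have hle : faceCount σ ≤ D * (D - 1) / 2 * k + D := by nlinarith
  refine ⟨?_, hle⟩
  obtain ⟨ω, hω⟩ := even_factorial_mul_sub_faceCount hD σ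
  have hnonneg : 0 ≤ ω + ω :=
    hω ▸ mul_nonneg (Nat.cast_nonneg _) (sub_nonneg.2 (by exact_mod_cast hle))
  lift ω to ℕ using by omega
  exact ⟨ω, by rw [hω, two_mul]⟩
end

section
/- Master bound on the N-exponent: for D ≥ 2 and any (D+1)-tuple σ of permutations of {1,…,k}, the exponent of N appearing in the Gaussian average of the trace invariant satisfies −(D−1)·k + F(σ) − F_D(σ_D) ≤ D·C(σ) − (D−1)·C_D(σ_D). -/
/-- Number of faces of the `D`-bubble (colors `1,…,D`) of `σ`:
`F_D(σ_D) = Σ_{1 ≤ c₁ < c₂ ≤ D} c(σ⁽ᶜ¹⁾ ∘ (σ⁽ᶜ²⁾)⁻¹)`. -/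
noncomputable def bubbleFaceCount {k D : ℕ} (σ : Fin (D + 1) → Equiv.Perm (Fin k)) : ℕ :=
  ∑ p ∈ Finset.univ.filter
      (fun p : Fin (D + 1) × Fin (D + 1) => 0 < p.1 ∧ p.1 < p.2),
    cycleCount (σ p.1 * (σ p.2)⁻¹)

/-- Number of connected components of the `D`-bubble of `σ`: the number of orbits
on `Fin k` of the subgroup generated by `(σ⁽¹⁾)⁻¹ ∘ σ⁽ᶜ⁾`, `2 ≤ c ≤ D`. -/
noncomputable def bubbleCompCount {k D : ℕ} (σ : Fin (D + 1) → Equiv.Perm (Fin k)) : ℕ :=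
  Nat.card (MulAction.orbitRel.Quotient
    (Subgroup.closure
      {g : Equiv.Perm (Fin k) | ∃ c : Fin (D + 1), 1 < c ∧ g = (σ 1)⁻¹ * σ c}) (Fin k))

/-!
A permutation `g` acts isometrically on functions by `x ↦ x ∘ g⁻¹`, and the orbits of a permutation
group are counted by the dimension of its space of invariant functions. Faces of colors `c`, `c'`
are therefore counted by the space on which the isometries of `c` and `c'` agree, and connected
components by intersections of such spaces.

For three isometries `U`, `V`, `W`, the difference `U - V` maps the space where `V` and `W` agree
into the orthogonal complement of the `U`-image of the two other agreement spaces. Counting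
dimensions gives the nonnegativity of the genus of a three-colored graph, in the manner of Scott's
lemma on generators of linear groups. The bound follows by adding the colors of the bubble one at a
time: each step is the three-color inequality, restricted to the functions constant on the
components of the previous bubble by submodularity of the dimension.
-/

namespace ColoredGraph

open Module Equiv

section Isometries

theorem finrank_map_add_finrank_inf_ker {K M N : Type*} [DivisionRing K] [AddCommGroup M]
    [Module K M] [AddCommGroup N] [Module K N] (f : M →ₗ[K] N) (p : Submodule K M)
    [FiniteDimensional K p] :
    finrank K (p.map f) + finrank K (p ⊓ f.ker : Submodule K M) = finrank K p := by
  rw [← (f.domRestrict p).finrank_range_add_finrank_ker, LinearMap.range_domRestrict,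
    LinearMap.ker_domRestrict, ← Submodule.map_comap_subtype, Submodule.finrank_map_subtype_eq]

theorem finrank_add_finrank_le_of_le {K M : Type*} [DivisionRing K] [AddCommGroup M] [Module K M]
    {X Y Z : Submodule K M} [FiniteDimensional K Z] (hX : X ≤ Z) (hY : Y ≤ Z) :
    finrank K X + finrank K Y ≤ finrank K Z + finrank K (X ⊓ Y : Submodule K M) := by
  have := Submodule.finiteDimensional_of_le hX
  have := Submodule.finiteDimensional_of_le hY
  rw [← Submodule.finrank_sup_add_finrank_inf_eq]
  gcongr
  exact Submodule.finrank_mono (sup_le hX hY)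

variable {𝕜 E F : Type*} [RCLike 𝕜] [NormedAddCommGroup E] [InnerProductSpace 𝕜 E]
  [NormedAddCommGroup F] [InnerProductSpace 𝕜 F]

/-- The space of vectors on which two isometries agree. For the isometries of two colors, its
dimension is the number of faces of these colors. -/
abbrev agreement (U V : E →ₗᵢ[𝕜] F) : Submodule 𝕜 E :=
  LinearMap.eqLocus U.toLinearMap V.toLinearMap

theorem agreement_comm (U V : E →ₗᵢ[𝕜] F) : agreement U V = agreement V U :=
  Submodule.ext fun _ => eq_comm

theorem agreement_inf_agreement (U V W : E →ₗᵢ[𝕜] F) :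
    agreement V W ⊓ agreement U V = agreement U V ⊓ agreement U W := by
  ext x
  simp only [Submodule.mem_inf, LinearMap.mem_eqLocus]
  grind

theorem agreement_inf_iInf_agreement {ι : Type*} (U V : E →ₗᵢ[𝕜] F) (W : ι → E →ₗᵢ[𝕜] F)
    (s : Finset ι) :
    agreement U V ⊓ ⨅ i ∈ s, agreement U (W i) =
      (⨅ i ∈ s, agreement V (W i)) ⊓ agreement U V := by
  ext x
  simp only [Submodule.mem_inf, Submodule.mem_iInf, LinearMap.mem_eqLocus]
  grind

theorem range_sub_isOrtho_map_agreement (U V : E →ₗᵢ[𝕜] F) :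
    (U.toLinearMap - V.toLinearMap).range ⟂ (agreement U V).map U.toLinearMap := by
  rw [Submodule.isOrtho_iff_inner_eq]
  rintro _ ⟨x, rfl⟩ _ ⟨y, hy : U y = V y, rfl⟩
  change inner 𝕜 (U x - V x) (U y) = 0
  rw [inner_sub_left, U.inner_map_map, hy, V.inner_map_map, sub_self]

theorem map_sub_isOrtho_map_sup_agreement (U V W : E →ₗᵢ[𝕜] F) :
    (agreement V W).map (U.toLinearMap - V.toLinearMap) ⟂
      (agreement U V ⊔ agreement U W).map U.toLinearMap := by
  rw [Submodule.map_sup, Submodule.isOrtho_sup_right]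
  refine ⟨(range_sub_isOrtho_map_agreement U V).mono_left LinearMap.map_le_range,
    (range_sub_isOrtho_map_agreement U W).mono_left ?_⟩
  rintro _ ⟨x, hx : V x = W x, rfl⟩
  exact ⟨x, by simp [hx]⟩

variable [FiniteDimensional 𝕜 E] [FiniteDimensional 𝕜 F]

theorem finrank_agreement_add_le (U V W : E →ₗᵢ[𝕜] F) :
    finrank 𝕜 (agreement U V) + finrank 𝕜 (agreement U W) + finrank 𝕜 (agreement V W) ≤
      finrank 𝕜 F + 2 * finrank 𝕜 (agreement U V ⊓ agreement U W : Submodule 𝕜 E) := by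
  set K := (agreement U V ⊔ agreement U W).map U.toLinearMap
  have finrank_K : finrank 𝕜 (agreement U V ⊔ agreement U W : Submodule 𝕜 E) = finrank 𝕜 K :=
    (Submodule.equivMapOfInjective _ U.injective _).finrank_eq
  have image_le : finrank 𝕜 ((agreement V W).map (U.toLinearMap - V.toLinearMap)) ≤ finrank 𝕜 Kᗮ :=
    Submodule.finrank_mono (map_sub_isOrtho_map_sup_agreement U V W).le
  have rank_nullity :=
    finrank_map_add_finrank_inf_ker (U.toLinearMap - V.toLinearMap) (agreement V W)
  rw [← LinearMap.eqLocus_eq_ker_sub, agreement_inf_agreement] at rank_nullity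
  have sup_inf := Submodule.finrank_sup_add_finrank_inf_eq (agreement U V) (agreement U W)
  have orthogonal := K.finrank_add_finrank_orthogonal
  lia

theorem finrank_inf_agreement_add_le (B : Submodule 𝕜 E) (U V W : E →ₗᵢ[𝕜] F) :
    finrank 𝕜 (B ⊓ agreement U V : Submodule 𝕜 E) +
        finrank 𝕜 (B ⊓ agreement U W : Submodule 𝕜 E) + finrank 𝕜 (agreement V W) ≤
      finrank 𝕜 F + 2 * finrank 𝕜 (B ⊓ (agreement U V ⊓ agreement U W) : Submodule 𝕜 E) := by
  have genus := finrank_agreement_add_le U V W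
  have restrict_left := finrank_add_finrank_le_of_le (K := 𝕜)
    (inf_le_right : B ⊓ agreement U V ≤ _) (inf_le_left : agreement U V ⊓ agreement U W ≤ _)
  have restrict_right := finrank_add_finrank_le_of_le (K := 𝕜)
    (inf_le_right : B ⊓ agreement U W ≤ _) (inf_le_right : agreement U V ⊓ agreement U W ≤ _)
  rw [inf_assoc, inf_left_idem] at restrict_left
  rw [inf_assoc, inf_left_comm (agreement U W), inf_idem] at restrict_right
  lia

theorem sum_finrank_agreement_add_le {ι : Type*} (U V : E →ₗᵢ[𝕜] F) (W : ι → E →ₗᵢ[𝕜] F)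
    (s : Finset ι) :
    finrank 𝕜 (agreement U V) + ∑ i ∈ s, finrank 𝕜 (agreement U (W i)) +
        s.card * finrank 𝕜 (⨅ i ∈ s, agreement V (W i) : Submodule 𝕜 E) ≤
      s.card * finrank 𝕜 F + (s.card + 1) *
        finrank 𝕜 (agreement U V ⊓ ⨅ i ∈ s, agreement U (W i) : Submodule 𝕜 E) := by
  classical
  rw [agreement_inf_iInf_agreement, agreement_comm U V]
  induction s using Finset.induction_on with
  | empty =>
    have iInf_empty : ⨅ i ∈ (∅ : Finset ι), agreement V (W i) = ⊤ := by simp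
    rw [iInf_empty, top_inf_eq]
    simp
  | insert j s hj ih =>
    rw [Finset.sum_insert hj, Finset.card_insert_of_notMem hj, Finset.iInf_insert,
      inf_comm (agreement V (W j)), inf_assoc, inf_comm (agreement V (W j))]
    set B := ⨅ i ∈ s, agreement V (W i)
    have genus := finrank_inf_agreement_add_le B V U (W j)
    have submodular := finrank_add_finrank_le_of_le (K := 𝕜)
      (inf_le_left : B ⊓ agreement V U ≤ B) (inf_le_left : B ⊓ agreement V (W j) ≤ B)
    rw [← inf_inf_distrib_left] at submodular
    have scaled := Nat.mul_le_mul_left s.card submodular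
    linarith

end Isometries

section Permutations

variable {α : Type*}

/-- The functions on `α` invariant under a group action, whose dimension is the number of orbits. -/
def invariantFunctions (G α : Type*) [Group G] [MulAction G α] :
    Submodule ℝ (EuclideanSpace ℝ α) where
  carrier := {x | ∀ (g : G) (a : α), x (g • a) = x a}
  add_mem' hx hy g a := by simp [hx g a, hy g a]
  zero_mem' _ _ := rfl
  smul_mem' r x hx g a := by simp [hx g a]

theorem finrank_invariantFunctions [Finite α] (G : Type*) [Group G] [MulAction G α] :
    finrank ℝ (invariantFunctions G α) = Nat.card (MulAction.orbitRel.Quotient G α) := by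
  let pullback := (WithLp.linearEquiv 2 ℝ (α → ℝ)).symm.toLinearMap ∘ₗ
    LinearMap.funLeft ℝ ℝ (Quotient.mk (MulAction.orbitRel G α))
  have injective : Function.Injective pullback :=
    (WithLp.linearEquiv 2 ℝ (α → ℝ)).symm.injective.comp
      (LinearMap.funLeft_injective_of_surjective ℝ ℝ _ Quotient.mk_surjective)
  have range_eq : pullback.range = invariantFunctions G α := by
    ext x
    constructor
    · rintro ⟨y, rfl⟩ g a
      exact congrArg y (Quotient.sound (MulAction.mem_orbit a g))
    · intro hx
      refine ⟨Quotient.lift x ?_, rfl⟩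
      rintro _ b ⟨g, rfl⟩
      exact hx g b
  have := Fintype.ofFinite (MulAction.orbitRel.Quotient G α)
  rw [← range_eq, LinearMap.finrank_range_of_inj injective, Nat.card_eq_fintype_card]
  exact finrank_fintype_fun_eq_card ℝ

theorem mem_invariantFunctions_closure {S : Set (Perm α)} {x : EuclideanSpace ℝ α} :
    x ∈ invariantFunctions (Subgroup.closure S) α ↔ ∀ g ∈ S, ∀ a, x (g a) = x a := by
  refine ⟨fun hx g hg => hx ⟨g, Subgroup.subset_closure hg⟩, fun hx ⟨g, hg⟩ => ?_⟩
  change ∀ a, x (g a) = x a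
  induction hg using Subgroup.closure_induction with
  | mem g hg => exact hx g hg
  | one => exact fun _ => rfl
  | mul g h _ _ hg hh => exact fun a => (hg (h a)).trans (hh a)
  | inv g _ hg => exact fun a => by simpa using (hg (g⁻¹ a)).symm

theorem orbitRel_zpowers_iff_sameCycle {f : Perm α} {x y : α} :
    MulAction.orbitRel (Subgroup.zpowers f) α x y ↔ f.SameCycle y x :=
  Subgroup.exists_zpowers

variable [Fintype α]

/-- The action `x ↦ x ∘ g⁻¹` of a permutation on functions. With this convention the isometries of
`g` and `h` agree on the functions invariant under `g⁻¹ * h`, as in the definition of the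
connected components, rather than under `g * h⁻¹`, as in that of the faces. -/
noncomputable def permIsometry (g : Perm α) : EuclideanSpace ℝ α →ₗᵢ[ℝ] EuclideanSpace ℝ α :=
  (LinearIsometryEquiv.piLpCongrLeft 2 ℝ ℝ g).toLinearIsometry

theorem mem_agreement_permIsometry {g h : Perm α} {x : EuclideanSpace ℝ α} :
    x ∈ agreement (permIsometry g) (permIsometry h) ↔ ∀ a, x ((g⁻¹ * h) a) = x a :=
  calc x ∈ agreement (permIsometry g) (permIsometry h)
    _ ↔ ∀ b, x (g⁻¹ b) = x (h⁻¹ b) := (WithLp.ext_iff _).trans funext_iff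
    _ ↔ ∀ a, x ((g⁻¹ * h) a) = x a := by
      rw [← h.forall_congr_right]
      simp only [Perm.mul_apply, Perm.inv_def, symm_apply_apply]

theorem card_orbits_closure_eq_finrank {ι : Type*} (τ : Perm α) (σ : ι → Perm α) (s : Finset ι) :
    Nat.card (MulAction.orbitRel.Quotient (Subgroup.closure ((fun c => τ⁻¹ * σ c) '' s)) α) =
      finrank ℝ (⨅ c ∈ s, agreement (permIsometry τ) (permIsometry (σ c)) :
        Submodule ℝ (EuclideanSpace ℝ α)) := by
  have invariant_eq_iInf : invariantFunctions (Subgroup.closure ((fun c => τ⁻¹ * σ c) '' s)) α =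
      ⨅ c ∈ s, agreement (permIsometry τ) (permIsometry (σ c)) := by
    ext x
    simp only [mem_invariantFunctions_closure, Set.forall_mem_image, Submodule.mem_iInf,
      mem_agreement_permIsometry, Finset.mem_coe]
  rw [← finrank_invariantFunctions, invariant_eq_iInf]

end Permutations

section Counts

variable {k D : ℕ}

theorem cycleCount_mul_inv (g h : Perm (Fin k)) : cycleCount (g * h⁻¹) = cycleCount (g⁻¹ * h) := by
  refine Nat.card_congr (Quotient.congr g⁻¹ fun x y => ?_)
  have conj_eq : g * h⁻¹ = g * (g⁻¹ * h)⁻¹ * g⁻¹ := by group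
  change MulAction.orbitRel _ _ x y ↔ MulAction.orbitRel _ _ (g⁻¹ x) (g⁻¹ y)
  rw [orbitRel_zpowers_iff_sameCycle, orbitRel_zpowers_iff_sameCycle, conj_eq, Perm.sameCycle_conj,
    Perm.sameCycle_inv]

theorem cycleCount_mul_inv_eq_finrank (g h : Perm (Fin k)) :
    cycleCount (g * h⁻¹) = finrank ℝ (agreement (permIsometry g) (permIsometry h)) := by
  have generator : {g⁻¹ * h} =
      (fun c => g⁻¹ * id c) '' (({h} : Finset (Perm (Fin k))) : Set (Perm (Fin k))) := by
    simp
  rw [cycleCount_mul_inv, cycleCount, Subgroup.zpowers_eq_closure, generator,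
    card_orbits_closure_eq_finrank, Finset.iInf_singleton, id_def]

theorem Ioi_zero_eq_insert_one : Finset.Ioi (0 : Fin (D + 2)) = insert 1 (Finset.Ioi 1) := by
  ext c
  simp only [Finset.mem_insert, Finset.mem_Ioi, Fin.lt_def, Fin.ext_iff, Fin.val_zero, Fin.val_one]
  lia

theorem bubbleCompCount_eq_finrank (σ : Fin (D + 1) → Perm (Fin k)) :
    bubbleCompCount σ = finrank ℝ (⨅ c ∈ Finset.Ioi 1,
      agreement (permIsometry (σ 1)) (permIsometry (σ c)) :
        Submodule ℝ (EuclideanSpace ℝ (Fin k))) := by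
  have generators : {g : Perm (Fin k) | ∃ c : Fin (D + 1), 1 < c ∧ g = (σ 1)⁻¹ * σ c} =
      (fun c => (σ 1)⁻¹ * σ c) '' Finset.Ioi (1 : Fin (D + 1)) := by
    ext g
    simp [eq_comm]
  rw [bubbleCompCount, generators, card_orbits_closure_eq_finrank]

theorem compCount_eq_finrank (σ : Fin (D + 2) → Perm (Fin k)) :
    compCount σ = finrank ℝ (agreement (permIsometry (σ 0)) (permIsometry (σ 1)) ⊓
      ⨅ c ∈ Finset.Ioi 1, agreement (permIsometry (σ 0)) (permIsometry (σ c)) :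
        Submodule ℝ (EuclideanSpace ℝ (Fin k))) := by
  have generators : {g : Perm (Fin k) | ∃ c : Fin (D + 2), c ≠ 0 ∧ g = (σ 0)⁻¹ * σ c} =
      (fun c => (σ 0)⁻¹ * σ c) '' Finset.Ioi (0 : Fin (D + 2)) := by
    ext g
    simp [eq_comm]
  rw [compCount, generators, card_orbits_closure_eq_finrank, Ioi_zero_eq_insert_one,
    Finset.iInf_insert]

theorem faceCount_eq (σ : Fin (D + 2) → Perm (Fin k)) :
    faceCount σ = bubbleFaceCount σ + (cycleCount (σ 0 * (σ 1)⁻¹) +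
      ∑ c ∈ Finset.Ioi 1, cycleCount (σ 0 * (σ c)⁻¹)) := by
  have pairs_with_zero : Finset.univ.filter
      (fun p : Fin (D + 2) × Fin (D + 2) => p.1 < p.2 ∧ ¬0 < p.1) = {0} ×ˢ Finset.Ioi 0 := by
    ext ⟨c, d⟩
    simp only [Finset.mem_filter_univ, Finset.mem_product, Finset.mem_singleton, Finset.mem_Ioi]
    grind
  rw [faceCount, ← Finset.sum_filter_add_sum_filter_not _ (0 < ·.1), Finset.filter_filter,
    Finset.filter_filter, pairs_with_zero, Finset.sum_product, Finset.sum_singleton,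
    Ioi_zero_eq_insert_one, Finset.sum_insert (by simp)]
  simp only [bubbleFaceCount, and_comm]

end Counts

end ColoredGraph

/-- Master bound on the `N`-exponent: for any `(D+1)`-tuple of permutations,
`−(D−1)·k + F(σ) − F_D(σ_D) ≤ D·C(σ) − (D−1)·C_D(σ_D)`. -/
theorem exponent_bound (k D : ℕ) (hk : 1 ≤ k) (hD : 2 ≤ D)
    (σ : Fin (D + 1) → Equiv.Perm (Fin k)) :
    -(D - 1 : ℤ) * k + (faceCount σ : ℤ) - (bubbleFaceCount σ : ℤ) ≤
      (D : ℤ) * compCount σ - (D - 1 : ℤ) * bubbleCompCount σ := by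
  obtain ⟨m, rfl⟩ : ∃ m, D = m + 1 := ⟨D - 1, by lia⟩
  have bound := ColoredGraph.sum_finrank_agreement_add_le (ColoredGraph.permIsometry (σ 0))
    (ColoredGraph.permIsometry (σ 1)) (fun c => ColoredGraph.permIsometry (σ c)) (Finset.Ioi 1)
  simp only [← ColoredGraph.cycleCount_mul_inv_eq_finrank, ← ColoredGraph.compCount_eq_finrank,
    ← ColoredGraph.bubbleCompCount_eq_finrank, finrank_euclideanSpace_fin] at bound
  have card_colors : (Finset.Ioi (1 : Fin (m + 2))).card = m := by simp
  rw [card_colors] at bound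
  rw [ColoredGraph.faceCount_eq]
  zify at bound
  push_cast
  linarith
end
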